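/- Suppose a group G has normal subgroups A ≤ N ≤ B (A, B normal in G, N a subgroup with A ≤ N ≤ B), where B/A is nilpotent of class s and A/A' is an elementary abelian 2-group of F_2-dimension r (A' = [A,A] and A' ≤ N). Then d(N) ≥ r^{1/(s+2)} / C for an absolute constant C; more precisely r ≤ d(N/A')^{s+2} ≤ d(N)^{s+2} using the nilpotent subgroup rank bound applied to N/A' ≤ B/A'. -/

import Mathlib

/-!
Pass to the quotient `Q = N/A'`, a nilpotent group of class at most `c = s + 1` generated by
`d = d(Q)` elements, with lower central series `Q = γ₀ ≥ γ₁ ≥ ⋯ ≥ γ_c = 1`. Modulo `γ_{n+1}` the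
term `γ_n` is generated by the `d ^ (n + 1)` left-normed commutators in the generators
(`exists_finset_lowerCentralSeries`), so the series refines to a chain of normal subgroups with at
most `d + d ^ 2 + ⋯ + d ^ c` cyclic factors. A finite subgroup `V` of exponent two meets a cyclic
factor in at most two elements (`card_inf_sup_zpowers_le`), whence
`|V| ≤ 2 ^ (d + ⋯ + d ^ c)`. For `d ≥ 2` the exponent is at most `d ^ (c + 1)`; for `d ≤ 1` the
group is cyclic, and the same estimate with `c = 1` gives `|V| ≤ 2 ^ d`. Taking `V = A/A'` yields
`r ≤ d ^ (s + 2)`. The bound `d(N/A') ≤ d(N)` holds because `N` surjects onto `N/A'`, and the real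
form follows on taking `(s + 2)`-th roots, with `C = 1`.
-/

namespace NilpotentRank

open Subgroup
open scoped commutatorElement

variable {Q : Type*} [Group Q]

/-- A subgroup squeezed between the two ends of a central factor is normal. -/
lemma normal_of_commutator_le {L K H : Subgroup Q} (hLK : ⁅L, (⊤ : Subgroup Q)⁆ ≤ K)
    (hKH : K ≤ H) (hHL : H ≤ L) : H.Normal := by
  refine ⟨fun h hh g => ?_⟩
  have h1 : ⁅h, g⁆ ∈ H := hKH (hLK (commutator_mem_commutator (hHL hh) (mem_top g)))
  have h2 : g * h * g⁻¹ = ⁅h, g⁆⁻¹ * h := by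
    rw [commutatorElement_def]; group
  rw [h2]
  exact H.mul_mem (H.inv_mem h1) hh

/-- An extension by a cyclic group enlarges the intersection with a finite subgroup of exponent two
by a factor of at most two, since a finite cyclic group has order equal to its exponent. -/
lemma card_inf_sup_zpowers_le {V : Subgroup Q} [Finite V] (hV : ∀ x ∈ V, x ^ 2 = 1)
    (H : Subgroup Q) [H.Normal] (t : Q) :
    Nat.card (V ⊓ (H ⊔ zpowers t) : Subgroup Q) ≤ 2 * Nat.card (V ⊓ H : Subgroup Q) := by
  set X : Subgroup Q := V ⊓ (H ⊔ zpowers t) with hX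
  set W : Subgroup (Q ⧸ H) := X.map (QuotientGroup.mk' H) with hW
  have : Finite X := Finite.of_injective _ (inclusion_injective (inf_le_left : X ≤ V))
  have hWz : W ≤ zpowers (QuotientGroup.mk' H t) := by
    rw [hW, ← MonoidHom.map_zpowers]
    refine (map_mono inf_le_right).trans ?_
    rw [Subgroup.map_sup, sup_le_iff]
    refine ⟨?_, le_rfl⟩
    rw [(Subgroup.map_eq_bot_iff _).2 (QuotientGroup.ker_mk' H).ge]
    exact bot_le
  have hcyc : IsCyclic W :=
    isCyclic_of_injective (inclusion hWz) (inclusion_injective hWz)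
  have hWfin : Finite W := by
    have : Finite (W : Set (Q ⧸ H)) := by
      rw [hW, coe_map]; exact Set.Finite.image _ (Set.toFinite (X : Set Q))
    exact this
  have hWcard : Nat.card W ≤ 2 := by
    rw [← IsCyclic.exponent_eq_card]
    refine Nat.le_of_dvd two_pos (Monoid.exponent_dvd_of_forall_pow_eq_one ?_)
    rintro ⟨_, x, hx, rfl⟩
    ext
    change QuotientGroup.mk' H x ^ 2 = 1
    rw [← map_pow, hV x hx.1, map_one]
  have h1 : Nat.card (V ⊓ H : Subgroup Q) * Nat.card W = Nat.card X := by
    rw [hW, ← relIndex_ker, QuotientGroup.ker_mk', relIndex,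
      ← card_mul_index (H.subgroupOf X)]
    congr 1
    have h3 : V ⊓ H = (H.subgroupOf X).map X.subtype := by
      rw [subgroupOf_map_subtype, hX]
      ext x
      simp only [mem_inf]
      exact ⟨fun h => ⟨h.2, h.1, mem_sup_left h.2⟩, fun h => ⟨h.2.1, h.1⟩⟩
    rw [h3, card_map_of_injective X.subtype_injective]
  rw [← h1, mul_comm]
  exact Nat.mul_le_mul_right _ hWcard

/-- Adjoining the elements of `T` to `K` one at a time climbs through a central factor `L / K` by
normal subgroups with cyclic quotients. -/
lemma card_inf_closure_sup_le {V : Subgroup Q} [Finite V] (hV : ∀ x ∈ V, x ^ 2 = 1)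
    {L K : Subgroup Q} (hKL : K ≤ L) (hLK : ⁅L, (⊤ : Subgroup Q)⁆ ≤ K)
    (T : Finset Q) (hT : (T : Set Q) ⊆ L) :
    Nat.card (V ⊓ (closure (T : Set Q) ⊔ K) : Subgroup Q) ≤
      2 ^ T.card * Nat.card (V ⊓ K : Subgroup Q) := by
  classical
  induction T using Finset.induction_on with
  | empty => simp
  | insert t T ht ih =>
    rw [Finset.coe_insert, Set.insert_subset_iff] at hT
    have hn : (closure (T : Set Q) ⊔ K).Normal :=
      normal_of_commutator_le hLK le_sup_right (sup_le ((closure_le _).2 hT.2) hKL)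
    have h := card_inf_sup_zpowers_le hV (closure (T : Set Q) ⊔ K) t
    have he : closure ((insert t T : Finset Q) : Set Q) ⊔ K =
        closure (T : Set Q) ⊔ K ⊔ zpowers t := by
      rw [Finset.coe_insert, Set.insert_eq, Subgroup.closure_union, zpowers_eq_closure, sup_assoc,
        sup_comm]
    rw [he, Finset.card_insert_of_notMem ht, pow_succ']
    calc _ ≤ _ := h
      _ ≤ _ := by rw [mul_assoc]; exact Nat.mul_le_mul_left _ (ih hT.2)

/-- If `S` generates `Q`, the `n`-th term of the lower central series (starting from `n = 0`) is
generated, modulo the next term, by at most `|S| ^ (n + 1)` elements. -/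
lemma exists_finset_lowerCentralSeries (S : Finset Q) (hS : closure (S : Set Q) = ⊤) (n : ℕ) :
    ∃ T : Finset Q, T.card ≤ S.card ^ (n + 1) ∧
      closure (T : Set Q) ⊔ (⊤ : Subgroup Q).lowerCentralSeries (n + 1) =
        (⊤ : Subgroup Q).lowerCentralSeries n := by
  classical
  induction n with
  | zero => exact ⟨S, by simp, by rw [hS, top_sup_eq]; rfl⟩
  | succ n ih =>
    obtain ⟨T, hTc, hT⟩ := ih
    set γ := (⊤ : Subgroup Q).lowerCentralSeries with hγ
    have hTn : (T : Set Q) ⊆ γ n := by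
      rw [← hT]; exact subset_closure.trans (SetLike.coe_subset_coe.2 le_sup_left)
    let U : Finset Q := (T ×ˢ S).image fun p => ⁅p.1, p.2⁆
    have hU : (U : Set Q) ⊆ γ (n + 1) := by
      intro x hx
      obtain ⟨p, hp, rfl⟩ := Finset.mem_image.1 (Finset.mem_coe.1 hx)
      exact commutator_mem_commutator (hTn (Finset.mem_product.1 hp).1) (mem_top _)
    refine ⟨U, ?_, ?_⟩
    · calc U.card ≤ (T ×ˢ S).card := Finset.card_image_le
        _ = T.card * S.card := Finset.card_product _ _
        _ ≤ S.card ^ (n + 1 + 1) := by rw [pow_succ _ (n + 1)]; exact Nat.mul_le_mul_right _ hTc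
    set M : Subgroup Q := closure (U : Set Q) ⊔ γ (n + 1 + 1) with hM
    have hML : M ≤ γ (n + 1) :=
      sup_le ((closure_le _).2 hU) (Subgroup.lowerCentralSeries_antitone _ (Nat.le_succ _))
    have hMn : M.Normal := normal_of_commutator_le (L := γ (n + 1)) le_rfl le_sup_right hML
    refine le_antisymm hML ?_
    -- It suffices that `γ n` is central modulo `M`: this holds for `T`, whose elements commute with
    -- the generators of `Q` modulo `M`, and for `γ (n + 1)`, as `γ (n + 2) ≤ M`.
    have hcomm : ∀ a b : Q, ⁅a, b⁆ ∈ M ↔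
        Commute (QuotientGroup.mk' M a) (QuotientGroup.mk' M b) := fun a b => by
      rw [← commutatorElement_eq_one_iff_commute, ← map_commutatorElement,
        QuotientGroup.mk'_apply, QuotientGroup.eq_one_iff]
    have hcentral : γ n ≤ (center (Q ⧸ M)).comap (QuotientGroup.mk' M) := by
      rw [← hT, sup_le_iff, closure_le]
      constructor
      · intro t ht
        have hle : closure (S : Set Q) ≤
            (centralizer {QuotientGroup.mk' M t}).comap (QuotientGroup.mk' M) := by
          rw [closure_le]
          intro x hx
          rw [SetLike.mem_coe, mem_comap, mem_centralizer_singleton_iff]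
          refine ((hcomm t x).1 (mem_sup_left (subset_closure ?_))).symm.eq
          exact Finset.mem_coe.2 (Finset.mem_image.2 ⟨(t, x), Finset.mem_product.2 ⟨ht, hx⟩, rfl⟩)
        rw [hS] at hle
        rw [SetLike.mem_coe, mem_comap, mem_center_iff]
        intro g
        obtain ⟨g, rfl⟩ := QuotientGroup.mk'_surjective M g
        exact mem_centralizer_singleton_iff.1 (hle (mem_top g))
      · intro x hx
        rw [mem_comap, mem_center_iff]
        intro g
        obtain ⟨g, rfl⟩ := QuotientGroup.mk'_surjective M g
        exact ((hcomm x g).1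
          (mem_sup_right (commutator_mem_commutator hx (mem_top g)))).symm.eq
    change ⁅γ n, (⊤ : Subgroup Q)⁆ ≤ M
    rw [commutator_le]
    intro a ha b _
    exact (hcomm a b).2 (mem_center_iff.1 (hcentral ha) _).symm

lemma card_le_of_lowerCentralSeries_eq_bot {V : Subgroup Q} [Finite V]
    (hV : ∀ x ∈ V, x ^ 2 = 1) (S : Finset Q) (hS : closure (S : Set Q) = ⊤) (c : ℕ)
    (hc : (⊤ : Subgroup Q).lowerCentralSeries c = ⊥) :
    Nat.card V ≤ 2 ^ ∑ i ∈ Finset.range c, S.card ^ (i + 1) := by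
  have key : ∀ n, Nat.card V ≤ 2 ^ (∑ i ∈ Finset.range n, S.card ^ (i + 1)) *
      Nat.card (V ⊓ (⊤ : Subgroup Q).lowerCentralSeries n : Subgroup Q) := by
    intro n
    induction n with
    | zero => simp
    | succ n ih =>
      obtain ⟨T, hTc, hT⟩ := exists_finset_lowerCentralSeries S hS n
      have hTn : (T : Set Q) ⊆ (⊤ : Subgroup Q).lowerCentralSeries n := by
        rw [← hT]; exact subset_closure.trans (SetLike.coe_subset_coe.2 le_sup_left)
      have h := card_inf_closure_sup_le hV
        (Subgroup.lowerCentralSeries_antitone (⊤ : Subgroup Q) n.le_succ) le_rfl T hTn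
      rw [hT] at h
      rw [Finset.sum_range_succ, pow_add, mul_assoc]
      refine ih.trans (Nat.mul_le_mul_left _ (h.trans (Nat.mul_le_mul_right _ ?_)))
      exact Nat.pow_le_pow_right two_pos hTc
  simpa [hc] using key c

lemma sum_pow_le (d : ℕ) (hd : 2 ≤ d) (c : ℕ) :
    ∑ i ∈ Finset.range c, d ^ (i + 1) ≤ d ^ (c + 1) := by
  induction c with
  | zero => simp
  | succ c ih =>
    rw [Finset.sum_range_succ, pow_succ d (c + 1)]
    nlinarith [Nat.mul_le_mul_left (d ^ (c + 1)) hd]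

/-- An elementary abelian `2`-subgroup of rank `r` in a finitely generated nilpotent group of class
at most `s + 1` satisfies `r ≤ d ^ (s + 2)`, where `d` is the minimal number of generators of the
ambient group. -/
lemma le_rank_pow [Group.FG Q] {V : Subgroup Q} (hV : ∀ x ∈ V, x ^ 2 = 1) (s r : ℕ)
    (hr : Nat.card V = 2 ^ r) (hc : (⊤ : Subgroup Q).lowerCentralSeries (s + 1) = ⊥) :
    r ≤ Group.rank Q ^ (s + 2) := by
  have : Finite V := Nat.finite_of_card_ne_zero (by rw [hr]; positivity)
  obtain ⟨S, hSc, hS⟩ := Group.rank_spec Q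
  rw [← hSc]
  have bound : ∀ c, (⊤ : Subgroup Q).lowerCentralSeries c = ⊥ →
      r ≤ ∑ i ∈ Finset.range c, S.card ^ (i + 1) := fun c hc => by
    have h := card_le_of_lowerCentralSeries_eq_bot hV S hS c hc
    rw [hr] at h
    exact (Nat.pow_le_pow_iff_right one_lt_two).1 h
  rcases le_or_gt 2 S.card with hd | hd
  · exact (bound _ hc).trans (sum_pow_le _ hd _)
  -- With at most one generator the sum `d + ⋯ + d ^ (s + 1)` is too large for `d = 1`; use instead
  -- that `Q` is cyclic, hence of class at most `1`.
  have hcyc : IsCyclic Q := by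
    obtain ⟨g, hg⟩ := Finset.card_le_one_iff_subset_singleton.1 (Nat.le_of_lt_succ hd)
    refine ⟨g, fun x => ?_⟩
    change x ∈ zpowers g
    rw [zpowers_eq_closure]
    refine closure_mono (k := {g}) (h := (S : Set Q)) (by exact_mod_cast hg) ?_
    rw [hS]; exact mem_top x
  have h1 : (⊤ : Subgroup Q).lowerCentralSeries 1 = ⊥ := by
    change ⁅(⊤ : Subgroup Q), (⊤ : Subgroup Q)⁆ = ⊥
    rw [eq_bot_iff, commutator_le]
    intro a _ b _
    let _ := hcyc.commGroup
    rw [mem_bot, commutatorElement_eq_one_iff_mul_comm]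
    exact mul_comm a b
  have h2 := bound 1 h1
  rw [Finset.sum_range_one, zero_add, pow_one] at h2
  exact h2.trans (Nat.le_self_pow (by omega) _)

lemma lowerCentralSeries_mono {H K : Subgroup Q} (h : H ≤ K) (n : ℕ) :
    H.lowerCentralSeries n ≤ K.lowerCentralSeries n := by
  induction n with
  | zero => exact h
  | succ n ih => exact commutator_mono ih h

end NilpotentRank


/-- Lower-bound step of Theorem 1: let `A ≤ N ≤ B` with `A, B` normal in `G`, let
`A' = [A,A]`, suppose `B/A'` is nilpotent of class at most `s+1`, and suppose the image of
`A` in `G/A'` (i.e. `A/A'`) is an elementary abelian `2`-group of `𝔽₂`-dimension `r`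
(so of cardinality `2^r`). Then `r ≤ d(N/A')^{s+2} ≤ d(N)^{s+2}`; in particular
`d(N) ≥ r^{1/(s+2)}/C` for an absolute constant `C`. -/
theorem stmt_15 {G : Type*} [Group G] (A N B : Subgroup G) [A.Normal] [B.Normal]
    (hAN : A ≤ N) (hNB : N ≤ B) (s r : ℕ)
    (hnilp : lowerCentralSeries (B.map (QuotientGroup.mk' ⁅A, A⁆)) (s + 1) = ⊥)
    (helem : ∀ x : G ⧸ (⁅A, A⁆ : Subgroup G),
      x ∈ A.map (QuotientGroup.mk' ⁅A, A⁆) → x ^ 2 = 1)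
    (hcard : Nat.card (A.map (QuotientGroup.mk' ⁅A, A⁆)) = 2 ^ r)
    (hFGN : Group.FG N) (hFGQ : Group.FG (N.map (QuotientGroup.mk' ⁅A, A⁆))) :
    r ≤ Group.rank (N.map (QuotientGroup.mk' ⁅A, A⁆)) ^ (s + 2) ∧
    Group.rank (N.map (QuotientGroup.mk' ⁅A, A⁆)) ^ (s + 2) ≤ Group.rank N ^ (s + 2) ∧
    ∃ C : ℝ, 1 ≤ C ∧ (r : ℝ) ^ (1 / ((s : ℝ) + 2)) / C ≤ (Group.rank N : ℝ) := by
  set π := QuotientGroup.mk' ⁅A, A⁆ with hπ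
  have hlcs : (⊤ : Subgroup (N.map π)).lowerCentralSeries (s + 1) = ⊥ := by
    rw [← (Subgroup.map_injective (N.map π).subtype_injective).eq_iff,
      Subgroup.top_subtype_lowerCentralSeries, Subgroup.map_bot, eq_bot_iff]
    exact (NilpotentRank.lowerCentralSeries_mono (Subgroup.map_mono hNB) _).trans hnilp.le
  have hAN' : A.map π ≤ N.map π := Subgroup.map_mono hAN
  have h1 : r ≤ Group.rank (N.map π) ^ (s + 2) := by
    refine NilpotentRank.le_rank_pow (V := (A.map π).subgroupOf (N.map π)) ?_ s r ?_ hlcs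
    · intro x hx
      exact Subtype.ext (helem x (Subgroup.mem_subgroupOf.1 hx))
    · rw [← hcard]
      exact Nat.card_congr (Subgroup.subgroupOfEquivOfLe hAN').toEquiv
  have h2 : Group.rank (N.map π) ^ (s + 2) ≤ Group.rank N ^ (s + 2) :=
    Nat.pow_le_pow_left
      (Group.rank_le_of_surjective (π.subgroupMap N) (π.subgroupMap_surjective N)) _
  refine ⟨h1, h2, 1, le_rfl, ?_⟩
  have h3 : (r : ℝ) ≤ (Group.rank N : ℝ) ^ ((s : ℝ) + 2) := by
    exact_mod_cast h1.trans h2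
  rw [div_one, one_div]
  exact (Real.rpow_inv_le_iff_of_pos (by positivity) (by positivity) (by positivity)).2 h3
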